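/- arXiv:1606.01766 — 2 statements merged into one kernel-verified Lean document; each statement's English description precedes it below -/
import Mathlib

section
/- Let P(λ) = ∑_{k=0}^d λ^k P_k be an n×n matrix polynomial over a field F with d = 2s+1 odd, and let λB+A be a pencil of size (s+1)n×(s+1)n, with A and B partitioned into (s+1)×(s+1) blocks A_{ij}, B_{ij} ∈ F^{n×n}. Then the identity (Λ_s(λ)^T⊗I_n)(λB+A)(Λ_s(λ)⊗I_n) = P(λ) holds if and only if the block conditions ∑_{i+j=d+2−k} B_{ij} + ∑_{i+j=d+1−k} A_{ij} = P_k hold for every k = 0, 1, …, d. In particular, if these conditions hold, then for each σ ∈ {1,−1} the block Kronecker pencil built from λB+A is a strong linearization of P(λ) regarded as grade d. -/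
open Polynomial Matrix
open scoped Kronecker

noncomputable section

/-- Entrywise inclusion of a constant matrix into polynomial matrices. -/
def matC {F : Type} [Field F] {m l : Type*} (M : Matrix m l F) : Matrix m l (Polynomial F) :=
  M.map fun a => (C a : Polynomial F)

/-- The pencil `λ ↦ A + λ B`, represented as a matrix over `F[λ]`. -/
def pencil {F : Type} [Field F] {m l : Type*} (A B : Matrix m l F) :
    Matrix m l (Polynomial F) :=
  matC A + (X : Polynomial F) • matC B

/-- Grade-`g` reversal `rev_g`, applied entrywise. -/
def revMat {F : Type} [Field F] {m l : Type*} (g : ℕ) (M : Matrix m l (Polynomial F)) :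
    Matrix m l (Polynomial F) :=
  M.map fun q => q.reflect g

/-- Entrywise evaluation of a polynomial matrix at a point. -/
def evalMat {F : Type} [Field F] {m l : Type*} (a : F) (M : Matrix m l (Polynomial F)) :
    Matrix m l F :=
  M.map fun q => q.eval a

/-- The matrix polynomial `P(λ) = ∑_{k=0}^d λ^k P_k` built from its coefficients. -/
def polyOfCoeffs {F : Type} [Field F] {n : ℕ} (d : ℕ) (Pc : ℕ → Matrix (Fin n) (Fin n) F) :
    Matrix (Fin n) (Fin n) (Polynomial F) :=
  ∑ k ∈ Finset.range (d + 1), (X : Polynomial F) ^ k • matC (Pc k)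

/-- The `(i,j)` block of a block-partitioned matrix. -/
def blk {α p q n m : Type*} (A : Matrix (p × n) (q × m) α) (i : p) (j : q) :
    Matrix n m α :=
  Matrix.of fun r c => A (i, r) (j, c)

/-- `Λ_s(λ) ⊗ I_n`, an `(s+1)n × n` polynomial matrix whose `i`-th block is `λ^{s-i} I_n`. -/
def Lam (F : Type) [Field F] (s n : ℕ) :
    Matrix (Fin (s+1) × Fin n) (Fin n) (Polynomial F) :=
  Matrix.of fun p c => if p.2 = c then (X : Polynomial F) ^ (s - (p.1 : ℕ)) else 0

/-- The pencil `L_s(λ) ∈ F[λ]^{s×(s+1)}` with `-1` on the diagonal and `λ` on the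
superdiagonal. -/
def Lpen (F : Type) [Field F] (s : ℕ) : Matrix (Fin s) (Fin (s+1)) (Polynomial F) :=
  Matrix.of fun i j =>
    if (j : ℕ) = (i : ℕ) then -1 else if (j : ℕ) = (i : ℕ) + 1 then X else 0

/-- The block Kronecker pencil `[[λB+A, L_s(λ)ᵀ⊗I_n],[σ L_s(λ)⊗I_n, 0]]` associated with a
pencil `M = λB+A` of size `(s+1)n × (s+1)n`. -/
def blockKron (F : Type) [Field F] (s n : ℕ) (σ : F)
    (M : Matrix (Fin (s+1) × Fin n) (Fin (s+1) × Fin n) (Polynomial F)) :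
    Matrix ((Fin (s+1) × Fin n) ⊕ (Fin s × Fin n)) ((Fin (s+1) × Fin n) ⊕ (Fin s × Fin n))
      (Polynomial F) :=
  Matrix.fromBlocks M (Lpen F s ⊗ₖ (1 : Matrix (Fin n) (Fin n) (Polynomial F)))ᵀ
    (σ • (Lpen F s ⊗ₖ (1 : Matrix (Fin n) (Fin n) (Polynomial F)))) 0

/-- `L` is a linearization of `P`: there are unimodular `U`, `V` with
`U L V = diag(I_m, P)` (up to the fixed identification of index sets). -/
def IsLinearization {F : Type} [Field F] (m : ℕ) {ι ρ : Type*} [Fintype ι] [DecidableEq ι]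
    [Fintype ρ] [DecidableEq ρ] (L : Matrix ι ι (Polynomial F))
    (P : Matrix ρ ρ (Polynomial F)) : Prop :=
  ∃ (e : (Fin m ⊕ ρ) ≃ ι) (U V : Matrix ι ι (Polynomial F)),
    IsUnit U.det ∧ IsUnit V.det ∧
      U * L * V =
        (Matrix.fromBlocks (1 : Matrix (Fin m) (Fin m) (Polynomial F)) 0 0 P).submatrix
          e.symm e.symm

/-- The block conditions `∑_{i+j=d+2-k} B_{ij} + ∑_{i+j=d+1-k} A_{ij} = P_k` for
`k = 0,…,d` (blocks are indexed here `0`-based, so `i+j` `1`-based is `i+j+2` `0`-based). -/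
def blockConds {F : Type} [Field F] {s n : ℕ} (d : ℕ) (Pc : ℕ → Matrix (Fin n) (Fin n) F)
    (A B : Matrix (Fin (s+1) × Fin n) (Fin (s+1) × Fin n) F) : Prop :=
  ∀ k, k ≤ d →
    (∑ p ∈ Finset.univ.filter
        (fun p : Fin (s+1) × Fin (s+1) => (p.1 : ℕ) + (p.2 : ℕ) + 2 + k = d + 2),
        blk B p.1 p.2) +
      (∑ p ∈ Finset.univ.filter
        (fun p : Fin (s+1) × Fin (s+1) => (p.1 : ℕ) + (p.2 : ℕ) + 2 + k = d + 1),
        blk A p.1 p.2) = Pc k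

/-- `L̂_t(λ) ⊗ I_n` (with `t = u+1`): first block column zero, remaining block columns
`L_{t-1}(λ) ⊗ I_n`; the column index is split as `Fin n ⊕ (Fin t × Fin n)`. -/
def LhatB (F : Type) [Field F] (u n : ℕ) :
    Matrix (Fin u × Fin n) (Fin n ⊕ Fin (u+1) × Fin n) (Polynomial F) :=
  Matrix.of fun p q =>
    match q with
    | Sum.inl _ => 0
    | Sum.inr c => (Lpen F u ⊗ₖ (1 : Matrix (Fin n) (Fin n) (Polynomial F))) p c

/-- The modified block Kronecker pencil `[[λB+A, L̂_t(λ)ᵀ⊗I_n],[σ L̂_t(λ)⊗I_n, 0]]`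
(with `t = u+1`). -/
def modBK (F : Type) [Field F] (u n : ℕ) (σ : F)
    (M : Matrix (Fin n ⊕ Fin (u+1) × Fin n) (Fin n ⊕ Fin (u+1) × Fin n) (Polynomial F)) :
    Matrix ((Fin n ⊕ Fin (u+1) × Fin n) ⊕ Fin u × Fin n)
      ((Fin n ⊕ Fin (u+1) × Fin n) ⊕ Fin u × Fin n) (Polynomial F) :=
  Matrix.fromBlocks M (LhatB F u n)ᵀ (σ • LhatB F u n) 0

/-- `Λ̂_t(λ) ⊗ I_n` (with `t = u+1`): the `(t+1)n × 2n` polynomial matrix whose transpose has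
block rows `(I_n, 0, …, 0)` and `(0, λ^{t-1}I_n, …, λ I_n, I_n)`. -/
def LamHatB (F : Type) [Field F] (u n : ℕ) :
    Matrix (Fin n ⊕ Fin (u+1) × Fin n) (Fin 2 × Fin n) (Polynomial F) :=
  Matrix.of fun q c =>
    match q with
    | Sum.inl r => if c.1 = 0 ∧ c.2 = r then 1 else 0
    | Sum.inr p => if c.1 = 1 ∧ c.2 = p.2 then (X : Polynomial F) ^ (u - (p.1 : ℕ)) else 0

/-- `Λ̃_t(λ) ⊗ I_n` (with `t = u+1`): the `(t+1)n × 2n` polynomial matrix whose transpose has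
block rows `(I_n, 0, …, 0)` and `(0, I_n, λ I_n, …, λ^{t-1} I_n)`. -/
def LamTildeB (F : Type) [Field F] (u n : ℕ) :
    Matrix (Fin n ⊕ Fin (u+1) × Fin n) (Fin 2 × Fin n) (Polynomial F) :=
  Matrix.of fun q c =>
    match q with
    | Sum.inl r => if c.1 = 0 ∧ c.2 = r then 1 else 0
    | Sum.inr p => if c.1 = 1 ∧ c.2 = p.2 then (X : Polynomial F) ^ (p.1 : ℕ) else 0

/-- A `2n × 2n` matrix assembled from four `n × n` blocks, indexed by `Fin 2 × Fin n`. -/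
def twoBlock {α : Type*} {n : ℕ} (W₁₁ W₁₂ W₂₁ W₂₂ : Matrix (Fin n) (Fin n) α) :
    Matrix (Fin 2 × Fin n) (Fin 2 × Fin n) α :=
  Matrix.of fun p q =>
    if p.1 = 0 then (if q.1 = 0 then W₁₁ p.2 q.2 else W₁₂ p.2 q.2)
    else (if q.1 = 0 then W₂₁ p.2 q.2 else W₂₂ p.2 q.2)

/-- `Λ_t(λ) ⊗ I_n` (with `t = u+1`), over the split row index `Fin n ⊕ (Fin t × Fin n)`:
block entries `λ^t I_n, λ^{t-1} I_n, …, λ I_n, I_n`. -/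
def LamFullB (F : Type) [Field F] (u n : ℕ) :
    Matrix (Fin n ⊕ Fin (u+1) × Fin n) (Fin n) (Polynomial F) :=
  Matrix.of fun q c =>
    match q with
    | Sum.inl r => if r = c then (X : Polynomial F) ^ (u + 1) else 0
    | Sum.inr p => if p.2 = c then (X : Polynomial F) ^ (u - (p.1 : ℕ)) else 0

/-- `N̂_t(λ) = Ĥ_t(λ) ⊗ I_n` (with `t = u+1`): `Ĥ_t ∈ F[λ]^{(t-1)×(t+1)}` has `(i,j)` entry
`λ^{i+1-j}` if `2 ≤ j ≤ i+1` and `0` otherwise. -/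
def NhatB (F : Type) [Field F] (u n : ℕ) :
    Matrix (Fin u × Fin n) (Fin n ⊕ Fin (u+1) × Fin n) (Polynomial F) :=
  Matrix.of fun p q =>
    match q with
    | Sum.inl _ => 0
    | Sum.inr c =>
        if (c.1 : ℕ) ≤ (p.1 : ℕ) ∧ p.2 = c.2 then
          (X : Polynomial F) ^ ((p.1 : ℕ) - (c.1 : ℕ)) else 0

end


lemma aux_abs {F : Type} [Field F] {m k ρ : Type} [Fintype m] [Fintype k] [Fintype ρ]
    [DecidableEq m] [DecidableEq k] [DecidableEq ρ] (w : ℕ)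
    (hw : w = Fintype.card m + Fintype.card m)
    (hk : Fintype.card m + Fintype.card ρ = Fintype.card k)
    (M : Matrix k k (Polynomial F)) (K : Matrix m k (Polynomial F))
    (K' : Matrix k m (Polynomial F)) (N : Matrix k ρ (Polynomial F))
    (E : Matrix ρ k (Polynomial F)) (P : Matrix ρ ρ (Polynomial F)) (σ : F) (hσ : σ * σ = 1)
    (h1 : K * K' = 1) (h2 : K * N = 0) (h3 : E * K' = 0) (h4 : E * N = 1)
    (hP : Nᵀ * M * N = P) :
    IsLinearization w (Matrix.fromBlocks M Kᵀ (σ • K) 0) P := by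
  classical
  have h5 : K' * K + N * E = 1 := by
    have : Matrix.fromRows K E * Matrix.fromCols K' N = 1 := by
      rw [Matrix.fromRows_mul_fromCols, h1, h2, h3, h4, Matrix.fromBlocks_one]
    have hc : Fintype.card (m ⊕ ρ) = Fintype.card k := by simp [hk]
    rw [Matrix.mul_eq_one_comm_of_card_eq _ _ _ hc, Matrix.fromCols_mul_fromRows] at this
    exact this
  have t1 : K'ᵀ * Kᵀ = 1 := by rw [← Matrix.transpose_mul, h1, Matrix.transpose_one]
  have t2 : Nᵀ * Kᵀ = 0 := by rw [← Matrix.transpose_mul, h2, Matrix.transpose_zero]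
  have t3 : K'ᵀ * Eᵀ = 0 := by rw [← Matrix.transpose_mul, h3, Matrix.transpose_zero]
  have t4 : Nᵀ * Eᵀ = 1 := by rw [← Matrix.transpose_mul, h4, Matrix.transpose_one]
  have t5 : Kᵀ * K'ᵀ + Eᵀ * Nᵀ = 1 := by
    rw [← Matrix.transpose_mul, ← Matrix.transpose_mul, ← Matrix.transpose_add, h5,
      Matrix.transpose_one]
  let e0 : Fin w ≃ m ⊕ m := Fintype.equivOfCardEq (by simp [hw])
  let e1 : (Fin w ⊕ ρ) ≃ ((m ⊕ m) ⊕ ρ) := Equiv.sumCongr e0 (Equiv.refl ρ)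
  let e2 : ((m ⊕ m) ⊕ ρ) ≃ (k ⊕ m) := Fintype.equivOfCardEq (by simp; omega)
  let U : Matrix ((m ⊕ m) ⊕ ρ) (k ⊕ m) (Polynomial F) :=
    Matrix.fromBlocks (Matrix.fromRows 0 K'ᵀ) (Matrix.fromRows (σ • 1) (-(σ • (K'ᵀ * M * K'))))
      Nᵀ (-(σ • (Nᵀ * M * K')))
  let U' : Matrix (k ⊕ m) ((m ⊕ m) ⊕ ρ) (Polynomial F) :=
    Matrix.fromBlocks (Matrix.fromCols (M * K') Kᵀ) Eᵀ (Matrix.fromCols (σ • 1) 0) 0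
  let V : Matrix (k ⊕ m) ((m ⊕ m) ⊕ ρ) (Polynomial F) :=
    Matrix.fromBlocks (Matrix.fromCols K' 0) N (Matrix.fromCols 0 1) (-(K'ᵀ * M * N))
  let V' : Matrix ((m ⊕ m) ⊕ ρ) (k ⊕ m) (Polynomial F) :=
    Matrix.fromBlocks (Matrix.fromRows K (K'ᵀ * M * N * E)) (Matrix.fromRows 0 1) E 0
  have hUU : U * U' = 1 := by
    simp only [U, U', Matrix.fromBlocks_multiply, Matrix.fromRows_mul_fromCols, Matrix.fromRows_mul]
    simp [smul_smul, hσ, t1, t2, t3, t4, Matrix.mul_assoc, Matrix.mul_fromCols]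
    ext1 i j
    rcases i with (i | i) | i <;> rcases j with (j | j) | j <;>
      simp [Matrix.one_apply, smul_smul, hσ]
  have hVV : V' * V = 1 := by
    simp only [V, V', Matrix.fromBlocks_multiply, Matrix.fromRows_mul_fromCols, Matrix.fromRows_mul]
    simp [h1, h2, h3, h4, Matrix.mul_assoc, Matrix.mul_fromCols]
    ext1 i j
    rcases i with (i | i) | i <;> rcases j with (j | j) | j <;>
      simp [Matrix.one_apply, smul_smul, hσ]
  have hULV : U * Matrix.fromBlocks M Kᵀ (σ • K) 0 * V = Matrix.fromBlocks 1 0 0 P := by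
    have hLV : Matrix.fromBlocks M Kᵀ (σ • K) 0 * V =
        Matrix.fromBlocks (Matrix.fromCols (M * K') Kᵀ) (Eᵀ * P)
          (Matrix.fromCols (σ • 1) 0) 0 := by
      have hz : M * N + Kᵀ * -(K'ᵀ * M * N) = Eᵀ * P := by
        have := congrArg (fun Z => Z * (M * N)) t5
        simp only [Matrix.add_mul, Matrix.one_mul] at this
        rw [← hP]
        simp only [Matrix.mul_neg, Matrix.mul_assoc] at this ⊢
        rw [← sub_eq_add_neg, sub_eq_iff_eq_add, add_comm, this]
      simp only [V, Matrix.fromBlocks_multiply, hz]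
      simp only [Matrix.mul_fromCols, Matrix.smul_mul, h1, h2]
      ext1 i j
      rcases i with i | i <;> rcases j with (j | j) | j <;> simp
    rw [Matrix.mul_assoc, hLV]
    have u3 : K'ᵀ * (Eᵀ * P) = 0 := by rw [← Matrix.mul_assoc, t3, Matrix.zero_mul]
    have u4 : Nᵀ * (Eᵀ * P) = P := by rw [← Matrix.mul_assoc, t4, Matrix.one_mul]
    simp only [U, Matrix.fromBlocks_multiply, Matrix.fromRows_mul_fromCols, Matrix.fromRows_mul]
    rw [← Matrix.fromBlocks_one]
    simp only [t1, t2,u3, u4, Matrix.mul_assoc, Matrix.mul_fromCols, Matrix.smul_mul, Matrix.neg_mul, Matrix.mul_smul, Matrix.mul_zero, Matrix.zero_mul, Matrix.mul_one, Matrix.one_mul]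
    ext1 i j
    rcases i with (i | i) | i <;> rcases j with (j | j) | j <;>
      simp [Matrix.one_apply, smul_smul, hσ]
  refine ⟨e1.trans e2, U.submatrix e2.symm id, V.submatrix id e2.symm, ?_, ?_, ?_⟩
  · rw [← Matrix.isUnit_iff_isUnit_det]
    apply IsUnit.of_mul_eq_one (U'.submatrix id e2.symm)
    rw [← Matrix.submatrix_mul _ _ _ _ _ Function.bijective_id, hUU, Matrix.submatrix_one_equiv]
  · rw [← Matrix.isUnit_iff_isUnit_det]
    apply IsUnit.of_mul_eq_one_right (V'.submatrix e2.symm id)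
    rw [← Matrix.submatrix_mul _ _ _ _ _ Function.bijective_id, hVV, Matrix.submatrix_one_equiv]
  · have : U.submatrix e2.symm id * Matrix.fromBlocks M Kᵀ (σ • K) 0 * V.submatrix id e2.symm
      = (U * Matrix.fromBlocks M Kᵀ (σ • K) 0 * V).submatrix e2.symm e2.symm := by
      ext i j; simp [Matrix.mul_apply]
    rw [this, hULV]
    ext i j
    simp only [Matrix.submatrix_apply, Equiv.symm_trans_apply]
    generalize e2.symm i = a
    generalize e2.symm j = b
    rcases a with a | a <;> rcases b with b | b <;> simp [e1, Matrix.one_apply]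

lemma aux_kron {F : Type} [Field F] (n s : ℕ)
    (M : Matrix (Fin (s+1) × Fin n) (Fin (s+1) × Fin n) (Polynomial F))
    (K : Matrix (Fin s) (Fin (s+1)) (Polynomial F))
    (K' : Matrix (Fin (s+1)) (Fin s) (Polynomial F)) (N : Matrix (Fin (s+1)) Unit (Polynomial F))
    (E : Matrix Unit (Fin (s+1)) (Polynomial F))
    (NN : Matrix (Fin (s+1) × Fin n) (Fin n) (Polynomial F))
    (hNN : NN = Matrix.of fun p c => if p.2 = c then N p.1 () else 0)
    (P : Matrix (Fin n) (Fin n) (Polynomial F)) (σ : F) (hσ : σ * σ = 1)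
    (h1 : K * K' = 1) (h2 : K * N = 0) (h3 : E * K' = 0) (h4 : E * N = 1)
    (hP : NNᵀ * M * NN = P) :
    IsLinearization (2*s*n)
      (Matrix.fromBlocks M (K ⊗ₖ (1 : Matrix (Fin n) (Fin n) (Polynomial F)))ᵀ
        (σ • (K ⊗ₖ (1 : Matrix (Fin n) (Fin n) (Polynomial F)))) 0) P := by
  have hN' : NN = (N ⊗ₖ (1 : Matrix (Fin n) (Fin n) (Polynomial F))).submatrix id
      (fun c => ((), c)) := by
    rw [hNN]; ext p c; simp [Matrix.one_apply]
  refine aux_abs (2*s*n) (by simp; ring) (by simp; ring) M _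
    (K' ⊗ₖ (1 : Matrix (Fin n) (Fin n) (Polynomial F))) NN
    ((E ⊗ₖ (1 : Matrix (Fin n) (Fin n) (Polynomial F))).submatrix (fun c => ((), c)) id)
    P σ hσ ?_ ?_ ?_ ?_ hP
  · rw [← Matrix.mul_kronecker_mul, h1]; simp
  · have : (K ⊗ₖ (1 : Matrix (Fin n) (Fin n) (Polynomial F))) * NN = ((K * N) ⊗ₖ
      (1 * 1 : Matrix (Fin n) (Fin n) (Polynomial F))).submatrix id (fun c => ((), c)) := by
      rw [Matrix.mul_kronecker_mul, hN']; rfl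
    rw [this, h2]; simp
  · have : ((E ⊗ₖ (1 : Matrix (Fin n) (Fin n) (Polynomial F))).submatrix (fun c => ((), c)) id) *
      (K' ⊗ₖ (1 : Matrix (Fin n) (Fin n) (Polynomial F))) = ((E * K') ⊗ₖ
      (1 * 1 : Matrix (Fin n) (Fin n) (Polynomial F))).submatrix (fun c => ((), c)) id := by
      rw [Matrix.mul_kronecker_mul]; rfl
    rw [this, h3]; simp
  · have : ((E ⊗ₖ (1 : Matrix (Fin n) (Fin n) (Polynomial F))).submatrix (fun c => ((), c)) id) *
      NN = ((E * N) ⊗ₖ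
      (1 * 1 : Matrix (Fin n) (Fin n) (Polynomial F))).submatrix (fun c => ((), c))
        (fun c => ((), c)) := by
      rw [Matrix.mul_kronecker_mul, hN']; rfl
    rw [this, h4]
    ext i j; simp [Matrix.one_apply]

lemma sum_two {F : Type} [Field F] {s : ℕ} (i : Fin s) (a b : Polynomial F)
    (f : Fin (s+1) → Polynomial F) :
    (∑ j : Fin (s+1), (if (j : ℕ) = (i : ℕ) then a else if (j : ℕ) = (i : ℕ) + 1 then b else 0)
      * f j) = a * f i.castSucc + b * f i.succ := by
  have : ∀ j : Fin (s+1), (if (j : ℕ) = (i : ℕ) then a else if (j : ℕ) = (i : ℕ) + 1 then b else 0)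
      * f j = (if j = i.castSucc then a * f j else 0) + (if j = i.succ then b * f j else 0) := by
    intro j
    simp only [Fin.ext_iff, Fin.val_castSucc, Fin.val_succ]
    by_cases h : (j : ℕ) = i
    · simp [h]
    · simp [h]
  simp [this, Finset.sum_add_distrib]

/-- entries of the product -/
lemma prod_entry {F : Type} [Field F] (n s : ℕ) (v : Fin (s+1) → Polynomial F)
    (M : Matrix (Fin (s+1) × Fin n) (Fin (s+1) × Fin n) (Polynomial F)) (r c : Fin n) :
    ((Matrix.of fun (p : Fin (s+1) × Fin n) (c : Fin n) => if p.2 = c then v p.1 else 0)ᵀ * M *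
      (Matrix.of fun (p : Fin (s+1) × Fin n) (c : Fin n) => if p.2 = c then v p.1 else 0)) r c =
    ∑ p : Fin (s+1) × Fin (s+1), v p.1 * M (p.1, r) (p.2, c) * v p.2 := by
  simp only [Matrix.mul_apply, Matrix.transpose_apply, Matrix.of_apply, Fintype.sum_prod_type,
    ite_mul, zero_mul, mul_ite, mul_zero, Finset.sum_ite_eq', Finset.mem_univ, if_true,
    Finset.sum_mul]
  exact Finset.sum_comm

lemma lam_entry {F : Type} [Field F] (n s : ℕ)
    (A B : Matrix (Fin (s+1) × Fin n) (Fin (s+1) × Fin n) F) (r c : Fin n) :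
    ((Lam F s n)ᵀ * pencil A B * Lam F s n) r c =
    ∑ p : Fin (s+1) × Fin (s+1), (C (A (p.1, r) (p.2, c)) * X ^ (2 * s - (p.1 + p.2 : ℕ)) +
      C (B (p.1, r) (p.2, c)) * X ^ (2 * s + 1 - (p.1 + p.2 : ℕ))) := by
  rw [Lam, prod_entry n s (fun i => X ^ (s - (i : ℕ)))]
  refine Finset.sum_congr rfl fun p _ => ?_
  have e1 : 2 * s - (p.1 + p.2 : ℕ) = (s - p.1) + (s - p.2) := by omega
  have e2 : 2 * s + 1 - (p.1 + p.2 : ℕ) = (s - p.1) + (s - p.2) + 1 := by omega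
  rw [e1, e2]
  simp [pencil, matC]
  ring

lemma part1 {F : Type} [Field F] (n s : ℕ)
    (Pc : ℕ → Matrix (Fin n) (Fin n) F)
    (A B : Matrix (Fin (s+1) × Fin n) (Fin (s+1) × Fin n) F) :
    (Lam F s n)ᵀ * pencil A B * Lam F s n = polyOfCoeffs (2*s+1) Pc ↔
        blockConds (2*s+1) Pc A B := by
  have hR : ∀ r c k, (polyOfCoeffs (2*s+1) Pc r c).coeff k =
      if k ≤ 2*s+1 then Pc k r c else 0 := by
    intro r c k
    have : polyOfCoeffs (2*s+1) Pc r c =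
        ∑ k ∈ Finset.range (2*s+1+1), C (Pc k r c) * X ^ k := by
      simp [polyOfCoeffs, matC, Matrix.sum_apply, Polynomial.X_pow_mul_C]
    rw [this]
    simp only [Polynomial.finsetSum_coeff, Polynomial.coeff_C_mul_X_pow, Finset.sum_ite_eq,
      Finset.mem_range, Nat.lt_succ_iff]
  have hL : ∀ r c k, (((Lam F s n)ᵀ * pencil A B * Lam F s n) r c).coeff k =
      ((∑ p ∈ Finset.univ.filter
        (fun p : Fin (s+1) × Fin (s+1) => (p.1 : ℕ) + (p.2 : ℕ) + 2 + k = (2*s+1) + 2),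
        blk B p.1 p.2) +
      (∑ p ∈ Finset.univ.filter
        (fun p : Fin (s+1) × Fin (s+1) => (p.1 : ℕ) + (p.2 : ℕ) + 2 + k = (2*s+1) + 1),
        blk A p.1 p.2)) r c := by
    intro r c k
    rw [lam_entry]
    simp only [Polynomial.finsetSum_coeff, Matrix.add_apply, Matrix.sum_apply, Finset.sum_filter,
      ← Finset.sum_add_distrib, Polynomial.coeff_add, Polynomial.coeff_C_mul_X_pow]
    refine Finset.sum_congr rfl fun p _ => ?_
    rw [add_comm]
    have ea : ∀ (Q : Prop) [Decidable Q] (Y : Matrix (Fin n) (Fin n) F),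
        (if Q then Y else 0) r c = if Q then Y r c else 0 := by
      intro Q _ Y; split_ifs <;> rfl
    rw [ea, ea]
    congr 1 <;> simp only [blk, Matrix.of_apply] <;> refine if_congr ?_ rfl rfl <;> omega
  constructor
  · intro h k hk
    ext r c
    rw [← hL, h, hR, if_pos hk]
  · intro h
    ext r c k
    rw [hL, hR]
    split_ifs with hk
    · rw [h k hk]
    · rw [Finset.filter_false_of_mem, Finset.filter_false_of_mem]
      · simp
      · intro p _; omega
      · intro p _; omega

lemma reflect_sum {F : Type} [Field F] {ι : Type} (t : Finset ι) (g : ℕ) (f : ι → Polynomial F) :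
    (∑ i ∈ t, f i).reflect g = ∑ i ∈ t, (f i).reflect g := by
  classical
  induction t using Finset.induction_on with
  | empty => simp
  | insert a t ha ih => rw [Finset.sum_insert ha, Finset.sum_insert ha, Polynomial.reflect_add, ih]

lemma reflect_pen {F : Type} [Field F] (a b : F) :
    (C a + X * C b : Polynomial F).reflect 1 = C b + X * C a := by
  have h1 := Polynomial.reflect_C_mul_X_pow (R := F) 1 0 (c := a)
  have h2 := Polynomial.reflect_C_mul_X_pow (R := F) 1 1 (c := b)
  rw [Polynomial.revAt_le (by omega)] at h1 h2
  simp only [pow_zero, mul_one, pow_one, Nat.sub_zero, Nat.sub_self] at h1 h2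
  rw [Polynomial.reflect_add, mul_comm X, h1, h2, add_comm, mul_comm X]

theorem stmt_3 {F : Type} [Field F] (n s : ℕ)
    (Pc : ℕ → Matrix (Fin n) (Fin n) F)
    (A B : Matrix (Fin (s+1) × Fin n) (Fin (s+1) × Fin n) F) :
    ((Lam F s n)ᵀ * pencil A B * Lam F s n = polyOfCoeffs (2*s+1) Pc ↔
        blockConds (2*s+1) Pc A B) ∧
      (blockConds (2*s+1) Pc A B → ∀ σ : F, σ = 1 ∨ σ = -1 →
        IsLinearization (2*s*n) (blockKron F s n σ (pencil A B)) (polyOfCoeffs (2*s+1) Pc) ∧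
          IsLinearization (2*s*n) (revMat 1 (blockKron F s n σ (pencil A B)))
            (revMat (2*s+1) (polyOfCoeffs (2*s+1) Pc))) := by
  refine ⟨part1 n s Pc A B, fun h σ hσ' => ?_⟩
  rw [← part1] at h
  have hσ : σ * σ = 1 := by rcases hσ' with h | h <;> simp [h]
  constructor
  · refine aux_kron n s (pencil A B) (Lpen F s)
      (Matrix.of fun i j => if (i : ℕ) ≤ j then -X ^ ((j : ℕ) - i) else 0)
      (Matrix.of fun i _ => X ^ (s - (i : ℕ)))
      (Matrix.of fun _ i => if i = Fin.last s then 1 else 0) (Lam F s n) rfl _ σ hσ ?_ ?_ ?_ ?_ h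
    · ext1 i j
      simp only [Matrix.mul_apply, Lpen, Matrix.of_apply]
      rw [sum_two]
      simp only [Matrix.one_apply, Fin.val_castSucc, Fin.val_succ, Fin.ext_iff]
      rcases lt_trichotomy (i : ℕ) j with h | h | h
      · obtain ⟨t, ht⟩ := Nat.exists_eq_add_of_lt h
        rw [if_pos (by omega), if_pos (by omega), if_neg (by omega),
          show (j : ℕ) - i = t + 1 by omega, show (j : ℕ) - (i + 1) = t by omega]
        ring
      · simp [h]
      · rw [if_neg (by omega), if_neg (by omega), if_neg (by omega)]; simp
    · ext1 i j
      simp only [Matrix.mul_apply, Lpen, Matrix.of_apply]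
      rw [sum_two]
      simp only [Fin.val_castSucc, Fin.val_succ, Matrix.zero_apply]
      rw [show s - (i : ℕ) = s - (i + 1) + 1 by omega]
      ring
    · ext1 i j
      simp only [Matrix.mul_apply, Matrix.of_apply, ite_mul, one_mul, zero_mul, Finset.sum_ite_eq',
        Finset.mem_univ, if_true]
      simp
    · ext1 i j
      simp only [Matrix.mul_apply, Matrix.of_apply, ite_mul, one_mul, zero_mul, Finset.sum_ite_eq',
        Finset.mem_univ, if_true]
      simp
  · have hrev : revMat 1 (blockKron F s n σ (pencil A B)) =
      Matrix.fromBlocks (pencil B A) (revMat 1 (Lpen F s) ⊗ₖ (1 : Matrix (Fin n) (Fin n) (Polynomial F)))ᵀ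
        (σ • (revMat 1 (Lpen F s) ⊗ₖ (1 : Matrix (Fin n) (Fin n) (Polynomial F)))) 0 := by
      ext1 i j
      rcases i with i | i <;> rcases j with j | j
      · simp [revMat, blockKron, pencil, matC, add_comm]
      · simp only [revMat, blockKron, Matrix.map_apply, Matrix.fromBlocks_apply₁₂,
          Matrix.transpose_apply, Matrix.kroneckerMap_apply, Matrix.one_apply]
        split_ifs <;> simp
      · simp only [revMat, blockKron, Matrix.map_apply, Matrix.fromBlocks_apply₂₁,
          Matrix.smul_apply, Matrix.kroneckerMap_apply, Matrix.one_apply, Polynomial.smul_eq_C_mul,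
          Polynomial.reflect_C_mul]
        split_ifs <;> simp
      · simp [revMat, blockKron]
    have hLr : revMat 1 (Lpen F s) = Matrix.of fun (i : Fin s) (j : Fin (s+1)) =>
        if (j : ℕ) = (i : ℕ) then -X else if (j : ℕ) = (i : ℕ) + 1 then 1 else 0 := by
      ext1 i j
      simp only [revMat, Lpen, Matrix.map_apply, Matrix.of_apply]
      split_ifs
      · simpa using reflect_pen (F := F) (-1) 0
      · simpa using reflect_pen (F := F) 0 1
      · simp
    rw [hrev, hLr]
    refine aux_kron n s (pencil B A) _
      (Matrix.of fun i j => if (j : ℕ) < i then X ^ ((i : ℕ) - 1 - j) else 0)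
      (Matrix.of fun i _ => X ^ (i : ℕ))
      (Matrix.of fun _ i => if i = 0 then 1 else 0) _ rfl _ σ hσ ?_ ?_ ?_ ?_ ?_
    · ext1 i j
      simp only [Matrix.mul_apply, Matrix.of_apply]
      rw [sum_two]
      simp only [Matrix.one_apply, Fin.val_castSucc, Fin.val_succ, Fin.ext_iff]
      rcases lt_trichotomy (j : ℕ) i with h | h | h
      · obtain ⟨t, ht⟩ := Nat.exists_eq_add_of_lt h
        rw [if_pos (by omega), if_pos (by omega), if_neg (by omega),
          show (i : ℕ) - 1 - j = t by omega, show (i : ℕ) + 1 - 1 - j = t + 1 by omega]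
        ring
      · simp [h]
      · rw [if_neg (by omega), if_neg (by omega), if_neg (by omega)]; simp
    · ext1 i j
      simp only [Matrix.mul_apply, Matrix.of_apply]
      rw [sum_two]
      simp only [Fin.val_castSucc, Fin.val_succ, Matrix.zero_apply]
      ring
    · ext1 i j
      simp only [Matrix.mul_apply, Matrix.of_apply, ite_mul, one_mul, zero_mul, Finset.sum_ite_eq',
        Finset.mem_univ, if_true]
      simp
    · ext1 i j
      simp only [Matrix.mul_apply, Matrix.of_apply, ite_mul, one_mul, zero_mul, Finset.sum_ite_eq',
        Finset.mem_univ, if_true]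
      simp
    · rw [← h]
      ext1 r c
      simp only [revMat, Matrix.map_apply]
      rw [lam_entry, reflect_sum]
      refine (prod_entry n s (fun i => X ^ (i : ℕ)) _ r c).trans ?_
      refine Finset.sum_congr rfl fun p _ => ?_
      rw [Polynomial.reflect_add, Polynomial.reflect_C_mul_X_pow, Polynomial.reflect_C_mul_X_pow,
        Polynomial.revAt_le (by omega), Polynomial.revAt_le (by omega),
        show 2 * s + 1 - (2 * s - (p.1 + p.2 : ℕ)) = p.1 + p.2 + 1 by omega,
        show 2 * s + 1 - (2 * s + 1 - (p.1 + p.2 : ℕ)) = p.1 + p.2 by omega]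
      simp [pencil, matC]
      ring
end

section
/- Let P(λ) = ∑_{k=0}^d λ^k P_k be a symmetric n×n matrix polynomial (P_k^T = P_k for all k) of odd degree d over a field F, and set s = (d−1)/2. Let A, B ∈ F^{(s+1)n×(s+1)n} be partitioned into (s+1)×(s+1) blocks A_{ij}, B_{ij} ∈ F^{n×n}. Then A and B are symmetric and satisfy the block conditions ∑_{i+j=d+2−k} B_{ij} + ∑_{i+j=d+1−k} A_{ij} = P_k for k = 0,…,d if and only if A_{ji} = A_{ij}^T and B_{ji} = B_{ij}^T for all i < j and, for every k = 1,…,s+1, B_{kk} = P_{d−2k+2} − ∑_{i+j=2k, i<j}(B_{ij}+B_{ij}^T) − ∑_{i+j=2k−1, i<j}(A_{ij}+A_{ij}^T) and A_{kk} = P_{d−2k+1} − ∑_{i+j=2k+1, i<j}(B_{ij}+B_{ij}^T) − ∑_{i+j=2k, i<j}(A_{ij}+A_{ij}^T). In particular, for every choice of the off-diagonal blocks A_{ij}, B_{ij} (i < j), these formulas produce symmetric matrices A, B satisfying the block conditions. -/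
open Polynomial Matrix
open scoped Kronecker

theorem aux_split {F : Type} [Field F] {n s : ℕ} (m : ℕ)
    (M : Fin (s+1) → Fin (s+1) → Matrix (Fin n) (Fin n) F)
    (h : ∀ i j, i < j → M j i = (M i j)ᵀ) :
    ∑ p ∈ Finset.univ.filter (fun p : Fin (s+1) × Fin (s+1) => (p.1 : ℕ) + (p.2 : ℕ) = m),
        M p.1 p.2 =
      ∑ p ∈ Finset.univ.filter (fun p : Fin (s+1) × Fin (s+1) =>
          (p.1 : ℕ) + (p.2 : ℕ) = m ∧ p.1 < p.2), (M p.1 p.2 + (M p.1 p.2)ᵀ) +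
      ∑ p ∈ Finset.univ.filter (fun p : Fin (s+1) × Fin (s+1) =>
          (p.1 : ℕ) + (p.2 : ℕ) = m ∧ p.1 = p.2), M p.1 p.2 := by
  have h2 : ∑ p ∈ Finset.univ.filter (fun p : Fin (s+1) × Fin (s+1) =>
          (p.1 : ℕ) + (p.2 : ℕ) = m ∧ p.1 < p.2), (M p.1 p.2)ᵀ =
      ∑ p ∈ Finset.univ.filter (fun p : Fin (s+1) × Fin (s+1) =>
          (p.1 : ℕ) + (p.2 : ℕ) = m ∧ p.2 < p.1), M p.1 p.2 := by
    refine Finset.sum_nbij' Prod.swap Prod.swap ?_ ?_ ?_ ?_ ?_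
    · intro p hp
      simp only [Finset.mem_filter, Finset.mem_univ, true_and, Prod.fst_swap, Prod.snd_swap] at hp ⊢
      exact ⟨by omega, hp.2⟩
    · intro p hp
      simp only [Finset.mem_filter, Finset.mem_univ, true_and, Prod.fst_swap, Prod.snd_swap] at hp ⊢
      exact ⟨by omega, hp.2⟩
    · intro p _; simp
    · intro p _; simp
    · intro p hp
      simp only [Finset.mem_filter, Finset.mem_univ, true_and] at hp
      exact (h _ _ hp.2).symm
  rw [Finset.sum_add_distrib, h2]
  simp only [Finset.sum_filter]
  rw [← Finset.sum_add_distrib, ← Finset.sum_add_distrib]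
  refine Finset.sum_congr rfl fun p _ => ?_
  by_cases hm : (p.1 : ℕ) + (p.2 : ℕ) = m
  · rcases lt_trichotomy p.1 p.2 with h | h | h
    · simp [hm, h, h.not_gt, h.ne]
    · simp [h]
    · simp [hm, h, h.not_gt, h.ne']
  · simp [hm]

theorem aux_even {F : Type} [Field F] {n s : ℕ} (κ : Fin (s+1))
    (M : Fin (s+1) → Fin (s+1) → Matrix (Fin n) (Fin n) F) :
    ∑ p ∈ Finset.univ.filter (fun p : Fin (s+1) × Fin (s+1) =>
          (p.1 : ℕ) + (p.2 : ℕ) = 2 * (κ : ℕ) ∧ p.1 = p.2), M p.1 p.2 = M κ κ := by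
  have : Finset.univ.filter (fun p : Fin (s+1) × Fin (s+1) =>
          (p.1 : ℕ) + (p.2 : ℕ) = 2 * (κ : ℕ) ∧ p.1 = p.2) = {(κ, κ)} := by
    ext ⟨a, b⟩
    simp only [Finset.mem_filter, Finset.mem_univ, true_and, Finset.mem_singleton, Prod.mk.injEq,
      Fin.ext_iff]
    omega
  rw [this, Finset.sum_singleton]

theorem aux_odd {F : Type} [Field F] {n s : ℕ} (m : ℕ) (hm : m % 2 = 1)
    (M : Fin (s+1) → Fin (s+1) → Matrix (Fin n) (Fin n) F) :
    ∑ p ∈ Finset.univ.filter (fun p : Fin (s+1) × Fin (s+1) =>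
          (p.1 : ℕ) + (p.2 : ℕ) = m ∧ p.1 = p.2), M p.1 p.2 = 0 := by
  apply Finset.sum_eq_zero
  intro p hp
  simp only [Finset.mem_filter, Finset.mem_univ, true_and, Fin.ext_iff] at hp
  omega

theorem aux_oddB {F : Type} [Field F] {n s : ℕ} (κ : ℕ)
    (M : Fin (s+1) → Fin (s+1) → Matrix (Fin n) (Fin n) F)
    (h : ∀ i j, i < j → M j i = (M i j)ᵀ) :
    ∑ p ∈ Finset.univ.filter (fun p : Fin (s+1) × Fin (s+1) =>
        (p.1 : ℕ) + (p.2 : ℕ) + 1 = 2 * κ), M p.1 p.2 =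
      ∑ p ∈ Finset.univ.filter (fun p : Fin (s+1) × Fin (s+1) =>
          (p.1 : ℕ) + (p.2 : ℕ) + 1 = 2 * κ ∧ p.1 < p.2), (M p.1 p.2 + (M p.1 p.2)ᵀ) := by
  rcases κ with _ | κ
  · simp
  · have e : ∀ x : ℕ, x + 1 = 2 * (κ + 1) ↔ x = 2 * κ + 1 := by intro x; omega
    simp only [e]
    rw [aux_split _ M h, aux_odd _ (by omega), add_zero]

theorem aux_symm {F : Type} [Field F] {n s : ℕ}
    (A : Matrix (Fin (s+1) × Fin n) (Fin (s+1) × Fin n) F) :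
    Aᵀ = A ↔ ∀ i j, blk A j i = (blk A i j)ᵀ := by
  constructor
  · intro h i j
    ext a b
    exact (congrFun (congrFun h (j, a)) (i, b)).symm
  · intro h
    ext ⟨i, a⟩ ⟨j, b⟩
    exact congrFun (congrFun (h i j) b) a

theorem aux_conds {F : Type} [Field F] {n s : ℕ} (Pc : ℕ → Matrix (Fin n) (Fin n) F)
    (A B : Matrix (Fin (s+1) × Fin n) (Fin (s+1) × Fin n) F) :
    blockConds (2*s+1) Pc A B ↔ ∀ κ : Fin (s+1),
      ((∑ p ∈ Finset.univ.filter (fun p : Fin (s+1) × Fin (s+1) =>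
          (p.1 : ℕ) + (p.2 : ℕ) = 2 * (κ : ℕ)), blk B p.1 p.2) +
       (∑ p ∈ Finset.univ.filter (fun p : Fin (s+1) × Fin (s+1) =>
          (p.1 : ℕ) + (p.2 : ℕ) + 1 = 2 * (κ : ℕ)), blk A p.1 p.2) = Pc (2*s+1 - 2*(κ : ℕ))) ∧
      ((∑ p ∈ Finset.univ.filter (fun p : Fin (s+1) × Fin (s+1) =>
          (p.1 : ℕ) + (p.2 : ℕ) = 2 * (κ : ℕ) + 1), blk B p.1 p.2) +
       (∑ p ∈ Finset.univ.filter (fun p : Fin (s+1) × Fin (s+1) =>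
          (p.1 : ℕ) + (p.2 : ℕ) = 2 * (κ : ℕ)), blk A p.1 p.2) =
            Pc (2*s+1 - 2*(κ : ℕ) - 1)) := by
  have e1 : ∀ κ : Fin (s+1), ∀ x : ℕ,
      x + 2 + (2*s+1 - 2*(κ : ℕ)) = 2*s+1+2 ↔ x = 2 * (κ : ℕ) := by intro κ x; omega
  have e2 : ∀ κ : Fin (s+1), ∀ x : ℕ,
      x + 2 + (2*s+1 - 2*(κ : ℕ)) = 2*s+1+1 ↔ x + 1 = 2 * (κ : ℕ) := by intro κ x; omega
  have e3 : ∀ κ : Fin (s+1), ∀ x : ℕ,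
      x + 2 + (2*s+1 - 2*(κ : ℕ) - 1) = 2*s+1+2 ↔ x = 2 * (κ : ℕ) + 1 := by intro κ x; omega
  have e4 : ∀ κ : Fin (s+1), ∀ x : ℕ,
      x + 2 + (2*s+1 - 2*(κ : ℕ) - 1) = 2*s+1+1 ↔ x = 2 * (κ : ℕ) := by intro κ x; omega
  constructor
  · intro h κ
    have h1 := h (2*s+1 - 2*(κ : ℕ)) (by omega)
    have h2 := h (2*s+1 - 2*(κ : ℕ) - 1) (by omega)
    simp only [e1, e2] at h1
    simp only [e3, e4] at h2
    exact ⟨h1, h2⟩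
  · intro h k hk
    have hκ : (2*s+1-k)/2 < s+1 := by omega
    obtain ⟨h1, h2⟩ := h ⟨(2*s+1-k)/2, hκ⟩
    rcases Nat.mod_two_eq_zero_or_one k with hp | hp
    · have ek : k = 2*s+1 - 2*(((⟨(2*s+1-k)/2, hκ⟩ : Fin (s+1)) : ℕ)) - 1 := by
        simp only; omega
      generalize (⟨(2*s+1-k)/2, hκ⟩ : Fin (s+1)) = κ at *
      subst ek
      simp only [e3, e4]
      exact h2
    · have ek : k = 2*s+1 - 2*(((⟨(2*s+1-k)/2, hκ⟩ : Fin (s+1)) : ℕ)) := by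
        simp only; omega
      generalize (⟨(2*s+1-k)/2, hκ⟩ : Fin (s+1)) = κ at *
      subst ek
      simp only [e1, e2]
      exact h1

theorem aux_sumT {F : Type} [Field F] {n s : ℕ} (S : Finset (Fin (s+1) × Fin (s+1)))
    (M : Fin (s+1) → Fin (s+1) → Matrix (Fin n) (Fin n) F) :
    (∑ p ∈ S, (M p.1 p.2 + (M p.1 p.2)ᵀ))ᵀ = ∑ p ∈ S, (M p.1 p.2 + (M p.1 p.2)ᵀ) := by
  rw [Matrix.transpose_sum]
  refine Finset.sum_congr rfl fun p _ => ?_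
  rw [Matrix.transpose_add, Matrix.transpose_transpose, add_comm]

/-- For a symmetric matrix polynomial `P` of odd degree `d = 2s+1`:
`A`, `B` are symmetric and satisfy the block conditions iff the off-diagonal blocks satisfy
`A_{ji} = A_{ij}ᵀ`, `B_{ji} = B_{ij}ᵀ` and the diagonal blocks are given by the explicit
formulas of Theorem 4.4 (indices below are 0-based: `κ = k-1`). -/
theorem stmt_4 {F : Type} [Field F] (n s : ℕ)
    (Pc : ℕ → Matrix (Fin n) (Fin n) F)
    (hsym : ∀ k, (Pc k)ᵀ = Pc k) (hdeg : Pc (2*s+1) ≠ 0)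
    (A B : Matrix (Fin (s+1) × Fin n) (Fin (s+1) × Fin n) F) :
    (Aᵀ = A ∧ Bᵀ = B ∧ blockConds (2*s+1) Pc A B) ↔
      ((∀ i j : Fin (s+1), i < j →
          blk A j i = (blk A i j)ᵀ ∧ blk B j i = (blk B i j)ᵀ) ∧
        ∀ κ : Fin (s+1),
          (blk B κ κ =
            Pc (2*s+1 - 2*(κ : ℕ)) -
              (∑ p ∈ Finset.univ.filter (fun p : Fin (s+1) × Fin (s+1) =>
                  (p.1 : ℕ) + (p.2 : ℕ) = 2*(κ : ℕ) ∧ p.1 < p.2),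
                (blk B p.1 p.2 + (blk B p.1 p.2)ᵀ)) -
              (∑ p ∈ Finset.univ.filter (fun p : Fin (s+1) × Fin (s+1) =>
                  (p.1 : ℕ) + (p.2 : ℕ) + 1 = 2*(κ : ℕ) ∧ p.1 < p.2),
                (blk A p.1 p.2 + (blk A p.1 p.2)ᵀ))) ∧
          (blk A κ κ =
            Pc (2*s+1 - 2*(κ : ℕ) - 1) -
              (∑ p ∈ Finset.univ.filter (fun p : Fin (s+1) × Fin (s+1) =>
                  (p.1 : ℕ) + (p.2 : ℕ) = 2*(κ : ℕ) + 1 ∧ p.1 < p.2),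
                (blk B p.1 p.2 + (blk B p.1 p.2)ᵀ)) -
              (∑ p ∈ Finset.univ.filter (fun p : Fin (s+1) × Fin (s+1) =>
                  (p.1 : ℕ) + (p.2 : ℕ) = 2*(κ : ℕ) ∧ p.1 < p.2),
                (blk A p.1 p.2 + (blk A p.1 p.2)ᵀ)))) := by
  have key : (∀ i j : Fin (s+1), i < j →
      blk A j i = (blk A i j)ᵀ ∧ blk B j i = (blk B i j)ᵀ) → (blockConds (2*s+1) Pc A B ↔
        ∀ κ : Fin (s+1),
          (blk B κ κ =
            Pc (2*s+1 - 2*(κ : ℕ)) -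
              (∑ p ∈ Finset.univ.filter (fun p : Fin (s+1) × Fin (s+1) =>
                  (p.1 : ℕ) + (p.2 : ℕ) = 2*(κ : ℕ) ∧ p.1 < p.2),
                (blk B p.1 p.2 + (blk B p.1 p.2)ᵀ)) -
              (∑ p ∈ Finset.univ.filter (fun p : Fin (s+1) × Fin (s+1) =>
                  (p.1 : ℕ) + (p.2 : ℕ) + 1 = 2*(κ : ℕ) ∧ p.1 < p.2),
                (blk A p.1 p.2 + (blk A p.1 p.2)ᵀ))) ∧
          (blk A κ κ =
            Pc (2*s+1 - 2*(κ : ℕ) - 1) -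
              (∑ p ∈ Finset.univ.filter (fun p : Fin (s+1) × Fin (s+1) =>
                  (p.1 : ℕ) + (p.2 : ℕ) = 2*(κ : ℕ) + 1 ∧ p.1 < p.2),
                (blk B p.1 p.2 + (blk B p.1 p.2)ᵀ)) -
              (∑ p ∈ Finset.univ.filter (fun p : Fin (s+1) × Fin (s+1) =>
                  (p.1 : ℕ) + (p.2 : ℕ) = 2*(κ : ℕ) ∧ p.1 < p.2),
                (blk A p.1 p.2 + (blk A p.1 p.2)ᵀ)))) :=
    fun h => by
      have hA := fun i j hij => (h i j hij).1
      have hB := fun i j hij => (h i j hij).2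
      rw [aux_conds]
      refine forall_congr' fun κ => ?_
      rw [aux_split _ (blk B) hB, aux_oddB _ (blk A) hA, aux_even κ (blk B),
        aux_split _ (blk B) hB, aux_split _ (blk A) hA, aux_even κ (blk A),
        aux_odd _ (by omega) (blk B), add_zero]
      refine and_congr ?_ ?_
      · rw [sub_sub, eq_sub_iff_add_eq]
        rw [← add_assoc, add_comm (blk B κ κ)]
      · rw [sub_sub, eq_sub_iff_add_eq, add_comm (blk A κ κ), add_assoc]
  constructor
  · rintro ⟨hA, hB, hc⟩
    rw [aux_symm] at hA hB
    have h : ∀ i j : Fin (s+1), i < j →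
      blk A j i = (blk A i j)ᵀ ∧ blk B j i = (blk B i j)ᵀ := fun i j _ => ⟨hA i j, hB i j⟩
    exact ⟨h, (key h).1 hc⟩
  · rintro ⟨h, hf⟩
    refine ⟨?_, ?_, (key h).2 hf⟩
    · rw [aux_symm]
      intro i j
      rcases lt_trichotomy i j with hij | rfl | hij
      · exact (h i j hij).1
      · rw [(hf i).2, Matrix.transpose_sub, Matrix.transpose_sub, hsym,
          aux_sumT _ (blk A), aux_sumT _ (blk B)]
      · rw [(h j i hij).1, Matrix.transpose_transpose]
    · rw [aux_symm]
      intro i j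
      rcases lt_trichotomy i j with hij | rfl | hij
      · exact (h i j hij).2
      · rw [(hf i).1, Matrix.transpose_sub, Matrix.transpose_sub, hsym,
          aux_sumT _ (blk A), aux_sumT _ (blk B)]
      · rw [(h j i hij).2, Matrix.transpose_transpose]
end
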